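/- Chebyshev systems generate convex bodies (Section 7): Let I = [a, b] ⊂ ℝ be a compact interval with a < b, and let Φ : I → ℝ^m be continuous such that for every choice of m distinct points t_1, …, t_m ∈ I the vectors Φ(t_1), …, Φ(t_m) are linearly independent in ℝ^m (i.e., Φ is a Chebyshev system). Then the convex hull of {0} ∪ { Φ(t) : t ∈ I } is a convex body: a compact convex subset of ℝ^m with nonempty interior. -/

import Mathlib

noncomputable section

/-!
By Carathéodory's theorem, the convex hull of a compact set in an `n`-dimensional space is the
continuous image of the compact set `stdSimplex × K ^ (n + 1)` under
`(w, z) ↦ ∑ i, w i • z i`, hence compact (`isCompact_convexHull_of_isCompact`). The set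
`{0} ∪ Φ([a, b])` is compact because `Φ` is continuous.

For the interior, a nondegenerate interval contains `m` distinct points. Their images under `Φ`
are `m` linearly independent vectors, so they span `ℝ^m`; together with `0` they affinely span
`ℝ^m`, and a set with full affine span has a convex hull with nonempty interior.
-/

/-- The weights and points from Carathéodory's theorem, of which there are at most `finrank ℝ E + 1`,
are padded with zero weights to a family indexed by `Fin (finrank ℝ E + 1)`. -/
lemma isCompact_convexHull_of_isCompact {E : Type*} [NormedAddCommGroup E] [NormedSpace ℝ E]
    [FiniteDimensional ℝ E] {K : Set E} (hK : IsCompact K) : IsCompact (convexHull ℝ K) := by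
  rcases K.eq_empty_or_nonempty with rfl | ⟨p, hp⟩
  · simp
  let n := Module.finrank ℝ E + 1
  have hcompact : IsCompact ((stdSimplex ℝ (Fin n)) ×ˢ (Set.univ.pi fun _ : Fin n => K)) :=
    (isCompact_stdSimplex ℝ (Fin n)).prod (isCompact_univ_pi fun _ => hK)
  have hcont : Continuous fun q : (Fin n → ℝ) × (Fin n → E) => ∑ i, q.1 i • q.2 i := by
    fun_prop
  convert hcompact.image hcont using 1
  ext x
  constructor
  · intro hx
    obtain ⟨ι, _, z, w, hz, hind, hw, hw1, rfl⟩ := eq_pos_convex_span_of_mem_convexHull hx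
    have hcard : Fintype.card ι ≤ Fintype.card (Fin n) := by
      rw [Fintype.card_fin]
      exact hind.card_le_finrank_succ.trans (Nat.succ_le_succ (Submodule.finrank_le _))
    obtain ⟨e⟩ := Function.Embedding.nonempty_of_card_le hcard
    have hwe : ∀ i, Function.extend e w 0 (e i) = w i := fun i => e.injective.extend_apply _ _ i
    have hze : ∀ i, Function.extend e z (fun _ => p) (e i) = z i :=
      fun i => e.injective.extend_apply _ _ i
    have hw0 : ∀ j ∉ Set.range e, Function.extend e w 0 j = 0 :=
      fun j hj => Function.extend_apply' _ _ _ hj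
    refine ⟨(Function.extend e w 0, Function.extend e z fun _ => p), ⟨⟨fun j => ?_, ?_⟩, ?_⟩, ?_⟩
    · by_cases hj : j ∈ Set.range e
      · obtain ⟨i, rfl⟩ := hj
        simpa only [hwe] using (hw i).le
      · exact (hw0 j hj).ge
    · rw [← hw1]
      exact (Fintype.sum_of_injective e e.injective _ _ hw0 fun i => (hwe i).symm).symm
    · intro j _
      by_cases hj : j ∈ Set.range e
      · obtain ⟨i, rfl⟩ := hj
        simpa only [hze] using hz ⟨i, rfl⟩
      · simpa only [Function.extend_apply' _ _ _ hj] using hp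
    · refine (Fintype.sum_of_injective e e.injective _ _ (fun j hj => ?_) fun i => ?_).symm
      · simp only [hw0 j hj, zero_smul]
      · simp only [hwe, hze]
  · rintro ⟨⟨w, z⟩, ⟨⟨hw, hw1⟩, hz⟩, rfl⟩
    exact mem_convexHull_of_exists_fintype w z hw hw1 (fun i => hz i trivial) rfl

/-- Chebyshev systems generate convex bodies (Section 7): the convex hull of
`{0} ∪ Φ([a,b])` is a compact convex set with nonempty interior in `ℝ^m`. -/
theorem chebyshev_convex_body
    (m : ℕ) (a b : ℝ) (hab : a < b)
    (Φ : ℝ → EuclideanSpace ℝ (Fin m)) (hΦ : ContinuousOn Φ (Set.Icc a b))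
    -- Φ is a Chebyshev system: any m distinct points give linearly independent vectors
    (hcheb : ∀ ts : Fin m → ℝ, (∀ i, ts i ∈ Set.Icc a b) → Function.Injective ts →
      LinearIndependent ℝ (fun i => Φ (ts i))) :
    IsCompact (convexHull ℝ ({0} ∪ Φ '' Set.Icc a b)) ∧
    Convex ℝ (convexHull ℝ ({0} ∪ Φ '' Set.Icc a b)) ∧
    (interior (convexHull ℝ ({0} ∪ Φ '' Set.Icc a b))).Nonempty := by
  refine ⟨isCompact_convexHull_of_isCompact
    (isCompact_singleton.union (isCompact_Icc.image_of_continuousOn hΦ)), convex_convexHull ℝ _, ?_⟩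
  rw [interior_convexHull_nonempty_iff_affineSpan_eq_top]
  let ts : Fin m → ℝ := fun i => (Set.Icc_infinite hab).natEmbedding _ i
  have hmem : ∀ i, ts i ∈ Set.Icc a b := fun i => Subtype.coe_prop _
  have hinj : Function.Injective ts := fun i j h =>
    Fin.ext (((Set.Icc_infinite hab).natEmbedding _).injective (Subtype.ext h))
  have hspan : Submodule.span ℝ (Set.range fun i => Φ (ts i)) = ⊤ :=
    (hcheb ts hmem hinj).span_eq_top_of_card_eq_finrank' (by simp)
  have htop : Submodule.span ℝ (Φ '' Set.Icc a b) = ⊤ := by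
    rw [eq_top_iff, ← hspan]
    apply Submodule.span_mono
    rintro _ ⟨i, rfl⟩
    exact ⟨ts i, hmem i, rfl⟩
  rw [Set.singleton_union]
  apply SetLike.coe_injective
  rw [affineSpan_insert_zero, htop]
  rfl
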